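/- For all g, h ∈ {0,1,…,d} with g ≤ h, the adjacency matrices of the wreath product satisfy A_g (A_0 + A_1 + ⋯ + A_h) = k_g (A_0 + A_1 + ⋯ + A_h). -/

import Mathlib

open Finset Matrix

/-- Vertex set of the wreath product `K_{n 0} ≀ K_{n 1} ≀ ⋯ ≀ K_{n (d-1)}`
(paper indices `n_1, …, n_d` correspond to `n 0, …, n (d-1)`). -/
abbrev Vx (d : ℕ) (n : ℕ → ℕ) : Type := (i : Fin d) → Fin (n i)

/-- `delta x y = 0` if `x = y`; otherwise `delta x y` is the largest (1-based)
index at which `x` and `y` differ. -/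
def delta {d : ℕ} {n : ℕ → ℕ} (x y : Vx d n) : ℕ :=
  (Finset.univ.filter fun i => x i ≠ y i).sup fun i => (i : ℕ) + 1

/-- The `i`-th adjacency matrix of the wreath product: `(A i) x y = 1` iff `delta x y = i`. -/
noncomputable def A (d : ℕ) (n : ℕ → ℕ) (i : ℕ) : Matrix (Vx d n) (Vx d n) ℂ :=
  Matrix.of fun x y => if delta x y = i then 1 else 0

/-- The valencies: `k 0 = 1` and, for `1 ≤ i`, `k i = n_1 ⋯ n_{i-1} (n_i - 1)`,
i.e. `k i = n 0 ⋯ n (i-2) * (n (i-1) - 1)`. -/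
def k (n : ℕ → ℕ) (i : ℕ) : ℕ :=
  if i = 0 then 1 else (∏ j ∈ Finset.range (i - 1), n j) * (n (i - 1) - 1)

/-- The dual idempotent `E_i*` with respect to the base point `x₀`: the diagonal
0-1 matrix with `(E_i*)_{yy} = 1` iff `delta x₀ y = i`. -/
noncomputable def Es {d : ℕ} {n : ℕ → ℕ} (x₀ : Vx d n) (i : ℕ) :
    Matrix (Vx d n) (Vx d n) ℂ :=
  Matrix.of fun y z => if y = z ∧ delta x₀ y = i then 1 else 0

/-- The all-ones matrix `J`. -/
noncomputable def Jm (d : ℕ) (n : ℕ → ℕ) : Matrix (Vx d n) (Vx d n) ℂ :=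
  Matrix.of fun _ _ => 1

/-- The matrices `G i j`. -/
noncomputable def G {d : ℕ} {n : ℕ → ℕ} (x₀ : Vx d n) (i j : ℕ) :
    Matrix (Vx d n) (Vx d n) ℂ :=
  if i < j then ((k n j : ℂ))⁻¹ • (Es x₀ i * A d n j * Es x₀ j)
  else if j < i then ((k n j : ℂ))⁻¹ • (Es x₀ i * A d n i * Es x₀ j)
  else ((k n i : ℂ))⁻¹ • (Es x₀ i * Jm d n * Es x₀ i)

/-- The span `U` of the matrices `G i j`, `i, j ∈ [d]`. -/
noncomputable def Uspan {d : ℕ} {n : ℕ → ℕ} (x₀ : Vx d n) :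
    Submodule ℂ (Matrix (Vx d n) (Vx d n) ℂ) :=
  Submodule.span ℂ (Set.range fun p : Fin (d + 1) × Fin (d + 1) => G x₀ p.1 p.2)

/-- The Terwilliger algebra of the wreath product with respect to `x₀`. -/
noncomputable def Ter {d : ℕ} {n : ℕ → ℕ} (x₀ : Vx d n) :
    Subalgebra ℂ (Matrix (Vx d n) (Vx d n) ℂ) :=
  Algebra.adjoin ℂ
    ((Set.range fun i : Fin (d + 1) => A d n i) ∪ (Set.range fun i : Fin (d + 1) => Es x₀ i))

/-- The matrices `F i h`, for `1 ≤ i ≤ d` and `0 ≤ h ≤ i - 1`. -/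
noncomputable def F {d : ℕ} {n : ℕ → ℕ} (x₀ : Vx d n) (i h : ℕ) :
    Matrix (Vx d n) (Vx d n) ℂ :=
  if h < i - 1 then
    (∑ j ∈ Finset.range (h + 1), (k n j : ℂ))⁻¹ •
        (∑ j ∈ Finset.range (h + 1), Es x₀ i * A d n j * Es x₀ i)
      - (∑ j ∈ Finset.range (h + 2), (k n j : ℂ))⁻¹ •
          (∑ j ∈ Finset.range (h + 2), Es x₀ i * A d n j * Es x₀ i)
  else
    (∑ j ∈ Finset.range i, (k n j : ℂ))⁻¹ •
        (∑ j ∈ Finset.range i, Es x₀ i * A d n j * Es x₀ i)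
      - G x₀ i i

/-!
For fixed `h`, the relation `delta x y ≤ h` says that `x` and `y` agree in all coordinates from the
`h`-th on (counted from `0`), so it is an equivalence relation, and `A 0 + ⋯ + A h` is its
indicator matrix. If `delta x z = g ≤ h`, then `x` and `z` lie in the same class, so the rows of
this matrix at `x` and `z` coincide. Each entry of the product with `A g` is therefore a sum of
equal terms over the `k g` points `z` at distance `g` from `x`.
-/

section WreathProduct

variable {d : ℕ} {n : ℕ → ℕ}

theorem delta_le_iff {x y : Vx d n} {m : ℕ} :
    delta x y ≤ m ↔ ∀ i : Fin d, m ≤ i → x i = y i := by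
  simp only [delta, Finset.sup_le_iff, mem_filter_univ, Nat.succ_le_iff]
  exact forall_congr' fun i => not_imp_comm.trans (by rw [not_lt])

theorem delta_le_congr_left {x z : Vx d n} {m : ℕ} (hxz : delta x z ≤ m) (y : Vx d n) :
    delta x y ≤ m ↔ delta z y ≤ m := by
  rw [delta_le_iff] at hxz
  rw [delta_le_iff, delta_le_iff]
  exact forall₂_congr fun i hi => by rw [hxz i hi]

theorem filter_delta_le_eq_piFinset (x : Vx d n) (m : ℕ) :
    ({y | delta x y ≤ m} : Finset (Vx d n)) =
      Fintype.piFinset fun i : Fin d => if (i : ℕ) < m then univ else {x i} := by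
  ext y
  rw [mem_filter_univ, delta_le_iff, Fintype.mem_piFinset]
  refine forall_congr' fun i => ?_
  by_cases hi : (i : ℕ) < m
  · simp [hi]
  · simp [hi, not_lt.mp hi, eq_comm]

theorem card_filter_delta_le (x : Vx d n) {m : ℕ} (hm : m ≤ d) :
    #{y | delta x y ≤ m} = ∏ j ∈ range m, n j := by
  have range_filter : {j ∈ range d | j < m} = range m := by
    ext j
    simp only [mem_filter, mem_range]
    omega
  calc #{y | delta x y ≤ m}
      = ∏ i : Fin d, #(if (i : ℕ) < m then univ else {x i}) := by
        rw [filter_delta_le_eq_piFinset, Fintype.card_piFinset]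
    _ = ∏ i : Fin d, if (i : ℕ) < m then n i else 1 :=
        prod_congr rfl fun i _ => by
          rw [apply_ite card, card_univ, Fintype.card_fin, card_singleton]
    _ = ∏ j ∈ range d, if j < m then n j else 1 :=
        Fin.prod_univ_eq_prod_range (fun j => if j < m then n j else 1) d
    _ = ∏ j ∈ range m, n j := by rw [← prod_filter, range_filter]

theorem card_filter_delta_le_succ (x : Vx d n) (m : ℕ) :
    #{y | delta x y ≤ m + 1} = #{y | delta x y ≤ m} + #{y | delta x y = m + 1} := by
  have disjoint_ball_sphere :
      Disjoint (univ.filter fun y => delta x y ≤ m) (univ.filter fun y => delta x y = m + 1) :=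
    disjoint_filter.mpr fun y _ hle heq => by omega
  simp only [Nat.le_succ_iff, filter_or, card_union_of_disjoint disjoint_ball_sphere]

theorem card_filter_delta_eq (x : Vx d n) {g : ℕ} (hg : g ≤ d) :
    #{y | delta x y = g} = k n g := by
  cases g with
  | zero => simpa [k] using card_filter_delta_le x hg
  | succ m =>
    have partition := card_filter_delta_le_succ x m
    rw [card_filter_delta_le x hg, card_filter_delta_le x (Nat.le_of_succ_le hg),
      prod_range_succ] at partition
    rw [k, if_neg m.succ_ne_zero, Nat.add_sub_cancel, Nat.mul_sub_one]
    omega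

theorem sum_range_succ_A_apply (h : ℕ) (x y : Vx d n) :
    (∑ i ∈ range (h + 1), A d n i) x y = if delta x y ≤ h then 1 else 0 := by
  simp [Matrix.sum_apply, A]

theorem A_mul_apply {ι : Type*} (g : ℕ) (M : Matrix (Vx d n) ι ℂ) (x : Vx d n) (y : ι) :
    (A d n g * M) x y = ∑ z with delta x z = g, M z y := by
  simp [Matrix.mul_apply, A, sum_filter]

theorem A_mul_eq_k_smul_of_row_eq {ι : Type*} {g : ℕ} (hg : g ≤ d) {M : Matrix (Vx d n) ι ℂ}
    (hM : ∀ x z, delta x z = g → M z = M x) : A d n g * M = (k n g : ℂ) • M := by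
  ext x y
  calc (A d n g * M) x y
      = ∑ z with delta x z = g, M z y := A_mul_apply g M x y
    _ = ∑ z with delta x z = g, M x y :=
        sum_congr rfl fun z hz => congrFun (hM x z ((mem_filter_univ z).mp hz)) y
    _ = ((k n g : ℂ) • M) x y := by
        rw [sum_const, card_filter_delta_eq x hg, Matrix.smul_apply, nsmul_eq_mul, smul_eq_mul]

end WreathProduct

/-- `A g (A 0 + ⋯ + A h) = k g (A 0 + ⋯ + A h)` for `g ≤ h ≤ d`. -/
theorem stmt9 (d : ℕ) (hd : 1 ≤ d) (n : ℕ → ℕ) (hn : ∀ i < d, 2 ≤ n i)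
    (g h : ℕ) (hgh : g ≤ h) (hh : h ≤ d) :
    A d n g * (∑ i ∈ Finset.range (h + 1), A d n i)
      = (k n g : ℂ) • (∑ i ∈ Finset.range (h + 1), A d n i) := by
  refine A_mul_eq_k_smul_of_row_eq (hgh.trans hh) fun x z hxz => ?_
  ext y
  simp only [sum_range_succ_A_apply, delta_le_congr_left (hxz.trans_le hgh) y]
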